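/- For every m ≥ 3, the vector space X_m of formal linear combinations Σ α_{i,j} A_iB_j (A_i ranging over set partitions of the m marked vertices into m−1 parts, B_j over set partitions into 2 parts) that evaluate to zero as spanning forest polynomials on every graph with m marked vertices has dimension exactly m(m−2); moreover there exists at least one identity Φ_{(1,1,...,1)}Φ_{(1,2,...,m)} = Σ α_{i,j} A_iB_j valid on all graphs, so the most general such identity has m(m−2) free parameters. -/

import Mathlib

open Finset

/-- A finite edge set `F` is a spanning forest of `G` compatible with the set partition of
(a subset of) the marked vertices `v : Fin m → V` encoded by `p : Fin m → Option ℕ`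
(`p i = none` means vertex `i` is unconstrained, `p i = some ℓ` means vertex `i` lies in
the part labelled `ℓ`): the edges of `F` lie in `G`, `F` is acyclic, two constrained
marked vertices lie in the same tree iff they have the same label, and every vertex of
the graph lies in the tree of some constrained marked vertex (so the trees of the forest
are in bijection with the parts of the partition). -/
def IsCompatibleForest {V : Type*} [Fintype V] [DecidableEq V] (G : SimpleGraph V) {m : ℕ}
    (v : Fin m → V) (p : Fin m → Option ℕ) (F : Finset (Sym2 V)) : Prop :=
  (F : Set (Sym2 V)) ⊆ G.edgeSet ∧
  (SimpleGraph.fromEdgeSet (F : Set (Sym2 V))).IsAcyclic ∧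
  (∀ i j : Fin m, p i ≠ none → p j ≠ none →
    ((SimpleGraph.fromEdgeSet (F : Set (Sym2 V))).Reachable (v i) (v j) ↔ p i = p j)) ∧
  (∀ w : V, ∃ i : Fin m, p i ≠ none ∧
    (SimpleGraph.fromEdgeSet (F : Set (Sym2 V))).Reachable w (v i))

/-- The spanning forest polynomial `Φ_P = Σ_{F ∼ P} Π_{e ∉ F} x_e` of the graph `G` with
edge variables `x`, marked vertices `v`, and partition `P` encoded by `p`. -/
noncomputable def forestPoly {V : Type*} [Fintype V] [DecidableEq V] {R : Type*}
    [CommRing R] (G : SimpleGraph V) [DecidableRel G.Adj] (x : Sym2 V → R) {m : ℕ}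
    (v : Fin m → V) (p : Fin m → Option ℕ) : R :=
  ∑ F ∈ G.edgeFinset.powerset,
    (letI := Classical.dec (IsCompatibleForest G v p F)
     if IsCompatibleForest G v p F then ∏ e ∈ G.edgeFinset \ F, x e else 0)

/-- The `(m−1)`-part partitions of the `m` marked vertices, indexed by their unique part
of size two. -/
def AIdx (m : ℕ) := {s : Finset (Fin m) // s.card = 2}

/-- The 2-part partitions of the `m` marked vertices, indexed by the part containing the
first marked vertex (a proper subset containing vertex `0`). -/
def BIdx (m : ℕ) := {S : Finset (Fin m) // (∃ i ∈ S, (i : ℕ) = 0) ∧ S ≠ Finset.univ}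

instance (m : ℕ) : Fintype (AIdx m) := Subtype.fintype _
instance (m : ℕ) : Fintype (BIdx m) := Subtype.fintype _

/-- The partition with the two vertices of `s` in one part and all other vertices
singletons, encoded with labels. -/
def partA {m : ℕ} (s : Finset (Fin m)) : Fin m → Option ℕ :=
  fun i => if i ∈ s then some m else some (i : ℕ)

/-- The 2-part partition with parts `S` and its complement, encoded with labels. -/
def partB {m : ℕ} (S : Finset (Fin m)) : Fin m → Option ℕ :=
  fun i => if i ∈ S then some 0 else some 1

/-- `α ∈ X_m`: the formal combination `Σ α_{ij} A_iB_j` evaluates to zero as spanning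
forest polynomials on every graph with `m` distinct marked vertices and every assignment
of values to the edge variables. -/
def MemX (m : ℕ) (α : AIdx m × BIdx m → ℚ) : Prop :=
  ∀ (V : Type) [Fintype V] [DecidableEq V] (G : SimpleGraph V) [DecidableRel G.Adj]
    (x : Sym2 V → ℚ) (v : Fin m → V), Function.Injective v →
    ∑ q : AIdx m × BIdx m, α q *
      (forestPoly G x v (partA q.1.val) * forestPoly G x v (partB q.2.val)) = 0

/-!
In terms of the edge weights `1 / x_e`, the spanning forests rooted at a set of marked vertices in
which `z` lies in the tree of a given root have a generating function that is harmonic in `z` away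
from the roots. Green's identity for two such functions gives, for marked vertices `j ≠ c`, the
column expansion `L_{m,c}(j)` of `Φ_{(1,…,1)} Φ_{(1,2,…,m)}`: the sum of the products `A_{i,j} B_S`
over all `i ≠ j` and all `S` separating `j` from both `i` and `c`. Two expansions along the same
column differ by an element of `X_m`.

Conversely, evaluate an element of `X_m` on a double star whose vertices are all marked. There `A_s`
is the product of the variables of all edges but `s`, and `B_S` is the variable of the edge with
fundamental cut `S`, so comparing coefficients of monomials determines every coefficient from the
numbers `λ_{p,r}` attached to the products of `A_{p,r}` and the partition isolating `r`. These form
an `m × m` matrix with zero diagonal and zero row sums, and every such matrix occurs, which gives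
the dimension `m(m-2)`.
-/

section EdgeSets

variable {V : Type*}

/-- The graph on `V` whose edges are the members of the finite edge set `F`; forests are
handled as edge sets, as in `IsCompatibleForest`. -/
abbrev edgeGraph (F : Finset (Sym2 V)) : SimpleGraph V :=
  SimpleGraph.fromEdgeSet (F : Set (Sym2 V))

lemma edgeGraph_empty : edgeGraph (∅ : Finset (Sym2 V)) = ⊥ := by
  simp [edgeGraph]

lemma edgeGraph_mono {F F' : Finset (Sym2 V)} (h : F ⊆ F') : edgeGraph F ≤ edgeGraph F' :=
  SimpleGraph.fromEdgeSet_mono (Finset.coe_subset.2 h)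

lemma edgeGraph_reachable_of_mem {F : Finset (Sym2 V)} {a b : V} (h : s(a, b) ∈ F) :
    (edgeGraph F).Reachable a b := by
  by_cases hab : a = b
  · exact hab ▸ .rfl
  · exact SimpleGraph.Adj.reachable (by simp [h, hab])

lemma exists_adj_reachable_deleteEdges {G : SimpleGraph V} {w k : V} (h : G.Reachable w k)
    (hwk : w ≠ k) : ∃ u, G.Adj w u ∧ (G.deleteEdges {s(w, u)}).Reachable u k := by
  obtain ⟨p, hp⟩ := h.exists_isPath
  cases p with
  | nil => exact absurd rfl hwk
  | @cons _ u _ hadj q =>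
    rw [SimpleGraph.Walk.cons_isPath_iff] at hp
    exact ⟨u, hadj, SimpleGraph.reachable_deleteEdges_iff_exists_walk.2
      ⟨q, fun he ↦ hp.2 (q.fst_mem_support_of_mem_edges he)⟩⟩

variable [DecidableEq V]

lemma edgeGraph_insert (F : Finset (Sym2 V)) (w u : V) :
    edgeGraph (insert s(w, u) F) = edgeGraph F ⊔ SimpleGraph.edge w u := by
  rw [SimpleGraph.edge, edgeGraph, Finset.coe_insert, Set.insert_eq, Set.union_comm,
    SimpleGraph.fromEdgeSet_union]

lemma edgeGraph_erase (F : Finset (Sym2 V)) (e : Sym2 V) :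
    edgeGraph (F.erase e) = (edgeGraph F).deleteEdges {e} := by
  rw [SimpleGraph.deleteEdges_fromEdgeSet, edgeGraph, Finset.coe_erase]

lemma edgeGraph_reachable_insert_iff {F : Finset (Sym2 V)} {w u a b : V} :
    (edgeGraph (insert s(w, u) F)).Reachable a b ↔ (edgeGraph F).Reachable a b ∨
      ((edgeGraph F).Reachable a w ∧ (edgeGraph F).Reachable u b) ∨
      ((edgeGraph F).Reachable a u ∧ (edgeGraph F).Reachable w b) := by
  have hs := edgeGraph_mono (Finset.subset_insert s(w, u) F)
  have he := edgeGraph_reachable_of_mem (Finset.mem_insert_self s(w, u) F)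
  constructor
  · intro h
    rw [SimpleGraph.reachable_iff_reflTransGen] at h
    induction h with
    | refl => exact .inl .rfl
    | @tail x y _ hxy ih =>
      simp only [SimpleGraph.fromEdgeSet_adj, Finset.coe_insert, Set.mem_insert_iff,
        Finset.mem_coe, Sym2.eq_iff] at hxy
      rcases hxy with ⟨(⟨rfl, rfl⟩ | ⟨rfl, rfl⟩) | hF, -⟩
      · have hyy : (edgeGraph F).Reachable y y := .rfl
        tauto
      · have hyy : (edgeGraph F).Reachable y y := .rfl
        tauto
      · have hxy := edgeGraph_reachable_of_mem hF
        exact ih.imp (·.trans hxy) (.imp (.imp_right (·.trans hxy)) (.imp_right (·.trans hxy)))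
  · rintro (h | ⟨h, h'⟩ | ⟨h, h'⟩)
    · exact h.mono hs
    · exact ((h.mono hs).trans he).trans (h'.mono hs)
    · exact ((h.mono hs).trans he.symm).trans (h'.mono hs)

lemma edgeGraph_reachable_erase {F : Finset (Sym2 V)} {w u a b : V}
    (h : (edgeGraph F).Reachable a b) (haw : ¬ (edgeGraph F).Reachable a w) :
    (edgeGraph (F.erase s(w, u))).Reachable a b := by
  by_cases hF : s(w, u) ∈ F
  · have hmono := edgeGraph_mono (F.erase_subset s(w, u))
    rw [← Finset.insert_erase hF, edgeGraph_reachable_insert_iff] at h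
    have hau : ¬ (edgeGraph F).Reachable a u := fun hau ↦
      haw (hau.trans (edgeGraph_reachable_of_mem hF).symm)
    rcases h with h | ⟨h, -⟩ | ⟨h, -⟩
    · exact h
    · exact absurd (h.mono hmono) haw
    · exact absurd (h.mono hmono) hau
  · rwa [Finset.erase_eq_of_notMem hF]

lemma edgeGraph_isAcyclic_insert {F : Finset (Sym2 V)} {w u : V}
    (hF : (edgeGraph F).IsAcyclic) (h : ¬ (edgeGraph F).Reachable w u) :
    (edgeGraph (insert s(w, u) F)).IsAcyclic := by
  rw [edgeGraph_insert]
  exact hF.sup_edge_of_not_reachable h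

lemma edgeGraph_not_reachable_erase {F : Finset (Sym2 V)} {w u : V}
    (hF : (edgeGraph F).IsAcyclic) (h : s(w, u) ∈ F) (hwu : w ≠ u) :
    ¬ (edgeGraph (F.erase s(w, u))).Reachable w u := by
  rw [edgeGraph_erase, ← SimpleGraph.isBridge_iff]
  exact SimpleGraph.isAcyclic_iff_forall_adj_isBridge.1 hF (by simp [h, hwu])

end EdgeSets

section RootedForest

variable {V : Type*} {G : SimpleGraph V}

/-- `F` is the edge set of a spanning forest of `G` each of whose trees contains exactly one
element of the root set `M`. -/
structure IsRootedForest (G : SimpleGraph V) (M : Finset V) (F : Finset (Sym2 V)) : Prop where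
  subset_edgeSet : (F : Set (Sym2 V)) ⊆ G.edgeSet
  isAcyclic : (edgeGraph F).IsAcyclic
  root_unique : ∀ a ∈ M, ∀ b ∈ M, (edgeGraph F).Reachable a b → a = b
  exists_root : ∀ w, ∃ a ∈ M, (edgeGraph F).Reachable w a

namespace IsRootedForest

variable {M : Finset V} {F : Finset (Sym2 V)} {w u u' : V}

lemma eq_of_mem (h : IsRootedForest G M F) (hu : u ∈ M) (hu' : u' ∈ M)
    (hw : (edgeGraph F).Reachable w u) (hw' : (edgeGraph F).Reachable w u') : u = u' :=
  h.root_unique u hu u' hu' (hw.symm.trans hw')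

variable [DecidableEq V]

lemma reachable_of_not_reachable {a b x y z : V} (h : IsRootedForest G {x, y} F)
    (ha : ¬ (edgeGraph F).Reachable a z) (hb : ¬ (edgeGraph F).Reachable b z) :
    (edgeGraph F).Reachable a b := by
  obtain ⟨ra, hra, hara⟩ := h.exists_root a
  obtain ⟨rb, hrb, hbrb⟩ := h.exists_root b
  obtain ⟨rz, hrz, hzrz⟩ := h.exists_root z
  have hraz : ra ≠ rz := fun heq ↦ ha (hara.trans (heq ▸ hzrz.symm))
  have hrbz : rb ≠ rz := fun heq ↦ hb (hbrb.trans (heq ▸ hzrz.symm))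
  obtain rfl : ra = rb := by grind
  exact hara.trans hbrb.symm

lemma not_reachable_of_mem (h : IsRootedForest G (insert w M) F) (hw : w ∉ M) {k : V}
    (hk : k ∈ M) : ¬ (edgeGraph F).Reachable w k := fun hwk ↦
  hw (h.root_unique w (mem_insert_self w M) k (mem_insert_of_mem hk) hwk ▸ hk)

lemma insert_edge (h : IsRootedForest G (insert w M) F) (hw : w ∉ M) (hadj : G.Adj w u)
    (hu : ¬ (edgeGraph F).Reachable w u) : IsRootedForest G M (insert s(w, u) F) where
  subset_edgeSet := by
    rw [Finset.coe_insert]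
    exact Set.insert_subset hadj h.subset_edgeSet
  isAcyclic := edgeGraph_isAcyclic_insert h.isAcyclic hu
  root_unique a ha b hb hab := by
    rcases edgeGraph_reachable_insert_iff.1 hab with hab | ⟨haw, -⟩ | ⟨-, hwb⟩
    · exact h.root_unique a (mem_insert_of_mem ha) b (mem_insert_of_mem hb) hab
    · exact absurd haw.symm (h.not_reachable_of_mem hw ha)
    · exact absurd hwb (h.not_reachable_of_mem hw hb)
  exists_root z := by
    obtain ⟨b, hb, hub⟩ := h.exists_root u
    replace hb : b ∈ M := mem_of_mem_insert_of_ne hb fun hbw ↦ hu (hbw ▸ hub.symm)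
    obtain ⟨a, ha, hza⟩ := h.exists_root z
    rcases mem_insert.1 ha with rfl | ha
    · exact ⟨b, hb, edgeGraph_reachable_insert_iff.2 (.inr (.inl ⟨hza, hub⟩))⟩
    · exact ⟨a, ha, edgeGraph_reachable_insert_iff.2 (.inl hza)⟩

lemma exists_erase (h : IsRootedForest G M F) (hw : w ∉ M) :
    ∃ u, s(w, u) ∈ F ∧ IsRootedForest G (insert w M) (F.erase s(w, u)) := by
  obtain ⟨k, hk, hwk⟩ := h.exists_root w
  obtain ⟨u, hadj, huk⟩ := exists_adj_reachable_deleteEdges hwk fun hwk ↦ hw (hwk ▸ hk)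
  rw [← edgeGraph_erase] at huk
  obtain ⟨huF, hwu⟩ := (SimpleGraph.fromEdgeSet_adj _).1 hadj
  have hmono := edgeGraph_mono (F.erase_subset s(w, u))
  have not_root {b} (hb : b ∈ M) : ¬ (edgeGraph (F.erase s(w, u))).Reachable w b := fun hwb ↦
    edgeGraph_not_reachable_erase h.isAcyclic huF hwu
      (hwb.trans (h.eq_of_mem hb hk (hwb.mono hmono) hwk ▸ huk.symm))
  refine ⟨u, huF, ?_, h.isAcyclic.anti hmono, fun a ha b hb hab ↦ ?_, fun z ↦ ?_⟩
  · exact (Finset.coe_subset.2 (F.erase_subset _)).trans h.subset_edgeSet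
  · rcases mem_insert.1 ha with rfl | haM <;> rcases mem_insert.1 hb with rfl | hbM
    · rfl
    · exact absurd hab (not_root hbM)
    · exact absurd hab.symm (not_root haM)
    · exact h.root_unique a haM b hbM (hab.mono hmono)
  · obtain ⟨a, ha, hza⟩ := h.exists_root z
    rw [← insert_erase (Finset.mem_coe.1 huF), edgeGraph_reachable_insert_iff] at hza
    rcases hza with hza | ⟨hzw, -⟩ | ⟨hzu, -⟩
    · exact ⟨a, mem_insert_of_mem ha, hza⟩
    · exact ⟨w, mem_insert_self w M, hzw⟩
    · exact ⟨k, mem_insert_of_mem hk, hzu.trans huk⟩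

lemma erase_unique (h : IsRootedForest G M F) (hw : w ∉ M) (hu' : s(w, u') ∈ F)
    (hr : IsRootedForest G (insert w M) (F.erase s(w, u)))
    (hr' : IsRootedForest G (insert w M) (F.erase s(w, u'))) : u = u' := by
  by_contra hne
  obtain ⟨k, hk, hwk⟩ := h.exists_root w
  have hu'k : (edgeGraph (F.erase s(w, u'))).Reachable u' k := by
    rw [← insert_erase hu', edgeGraph_reachable_insert_iff] at hwk
    rcases hwk with hwk | ⟨-, hu'k⟩ | ⟨-, hwk⟩
    · exact absurd hwk (hr'.not_reachable_of_mem hw hk)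
    · exact hu'k
    · exact absurd hwk (hr'.not_reachable_of_mem hw hk)
  have hu'w : ¬ (edgeGraph (F.erase s(w, u'))).Reachable u' w := fun hu'w ↦
    edgeGraph_not_reachable_erase h.isAcyclic hu'
      ((SimpleGraph.mem_edgeSet G).1 (h.subset_edgeSet hu')).ne hu'w.symm
  have hu'k' : (edgeGraph (F.erase s(w, u))).Reachable u' k :=
    (edgeGraph_reachable_erase (u := u) hu'k hu'w).mono
      (edgeGraph_mono (erase_subset_erase _ (erase_subset _ _)))
  have hwu' : (edgeGraph (F.erase s(w, u))).Reachable w u' :=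
    edgeGraph_reachable_of_mem (mem_erase.2 ⟨fun h ↦ hne (Sym2.congr_right.1 h).symm, hu'⟩)
  exact hr.not_reachable_of_mem hw hk (hwu'.trans hu'k')

end IsRootedForest

end RootedForest

section Laplacian

variable {V : Type*} [Fintype V] {G : SimpleGraph V} [DecidableRel G.Adj] {R : Type*}
  [CommRing R]

/-- The Laplacian of the weighted graph `(G, y)`. -/
def weightedLaplacian (G : SimpleGraph V) [DecidableRel G.Adj] (y : Sym2 V → R) (f : V → R)
    (w : V) : R :=
  ∑ u ∈ G.neighborFinset w, y s(w, u) * (f w - f u)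

lemma sum_mul_weightedLaplacian_comm (y : Sym2 V → R) (f g : V → R) :
    ∑ z, f z * weightedLaplacian G y g z = ∑ z, g z * weightedLaplacian G y f z := by
  simp only [weightedLaplacian, mul_sum, mul_sub, sum_sub_distrib]
  congr 1
  · exact sum_congr rfl fun z _ ↦ sum_congr rfl fun u _ ↦ by ring
  · rw [sum_comm' (t' := univ) (s' := fun u ↦ G.neighborFinset u)
      (by simp [SimpleGraph.adj_comm])]
    exact sum_congr rfl fun z _ ↦ sum_congr rfl fun u _ ↦ by rw [Sym2.eq_swap]; ring

end Laplacian

section HarmonicWeight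

variable {V : Type*} [Fintype V] {G : SimpleGraph V} {M : Finset V} {w j : V}

open scoped Classical in
/-- The finite set of spanning forests of `G` rooted at `M`. -/
noncomputable def rootedForests (G : SimpleGraph V) (M : Finset V) : Finset (Finset (Sym2 V)) :=
  {F | IsRootedForest G M F}

@[simp]
lemma mem_rootedForests {F : Finset (Sym2 V)} :
    F ∈ rootedForests G M ↔ IsRootedForest G M F := by
  simp [rootedForests]

variable [DecidableEq V]

open scoped Classical in
lemma sum_rootedForests_insert [DecidableRel G.Adj] {N : Type*} [AddCommMonoid N] (hw : w ∉ M)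
    (g : Finset (Sym2 V) → N) :
    ∑ F ∈ rootedForests G (insert w M),
        ∑ u ∈ G.neighborFinset w with ¬ (edgeGraph F).Reachable w u, g (insert s(w, u) F) =
      ∑ F ∈ rootedForests G M, g F := by
  rw [sum_sigma']
  refine sum_bij (fun p _ ↦ insert s(w, p.2) p.1) ?_ ?_ ?_ fun _ _ ↦ rfl
  · rintro ⟨F, u⟩ h
    simp only [mem_sigma, mem_rootedForests, mem_filter, SimpleGraph.mem_neighborFinset] at h ⊢
    exact h.1.insert_edge hw h.2.1 h.2.2
  · rintro ⟨F, u⟩ h ⟨F', u'⟩ h' heq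
    simp only [mem_sigma, mem_rootedForests, mem_filter, SimpleGraph.mem_neighborFinset]
      at h h' heq
    have hF : (insert s(w, u) F).erase s(w, u) = F :=
      erase_insert fun hF ↦ h.2.2 (edgeGraph_reachable_of_mem hF)
    have hF' : (insert s(w, u) F).erase s(w, u') = F' :=
      heq ▸ erase_insert fun hF' ↦ h'.2.2 (edgeGraph_reachable_of_mem hF')
    have hu : u = u' := (h.1.insert_edge hw h.2.1 h.2.2).erase_unique hw
      (heq ▸ mem_insert_self _ _) (hF.symm ▸ h.1) (hF'.symm ▸ h'.1)
    subst hu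
    rw [← hF, ← hF']
  · intro F hF
    rw [mem_rootedForests] at hF
    obtain ⟨u, hu, hr⟩ := hF.exists_erase hw
    have hadj : G.Adj w u := hF.subset_edgeSet hu
    refine ⟨⟨F.erase s(w, u), u⟩, ?_, insert_erase hu⟩
    simp only [mem_sigma, mem_rootedForests, mem_filter, SimpleGraph.mem_neighborFinset]
    exact ⟨hr, hadj, edgeGraph_not_reachable_erase hF.isAcyclic hu hadj.ne⟩

variable {R : Type*} [CommRing R] (y : Sym2 V → R)

open scoped Classical in
/-- The generating function of the forests rooted at `M` in which `z` lies in the tree of `j`. As a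
function of `z` this is harmonic off `M`, up to normalization the probability that the random walk
with conductances `y` started at `z` hits `M` at `j`. -/
noncomputable def harmonicWeight (G : SimpleGraph V) (y : Sym2 V → R) (M : Finset V) (j z : V) :
    R :=
  ∑ F ∈ rootedForests G M with (edgeGraph F).Reachable z j, ∏ e ∈ F, y e

lemma harmonicWeight_self : harmonicWeight G y M j j = ∑ F ∈ rootedForests G M, ∏ e ∈ F, y e := by
  simp [harmonicWeight]

lemma harmonicWeight_of_mem {i : V} (hi : i ∈ M) (hj : j ∈ M) (hij : i ≠ j) :
    harmonicWeight G y M j i = 0 := by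
  refine sum_eq_zero fun F hF ↦ ?_
  rw [mem_filter, mem_rootedForests] at hF
  exact absurd (hF.1.root_unique i hi j hj hF.2) hij

lemma harmonicWeight_singleton (z : V) :
    harmonicWeight G y {j} j z = harmonicWeight G y {j} j j := by
  rw [harmonicWeight_self, harmonicWeight, filter_true_of_mem]
  intro F hF
  simpa using (mem_rootedForests.1 hF).exists_root z

variable [DecidableRel G.Adj]

open scoped Classical in
lemma harmonicWeight_eq_sum_insert (hw : w ∉ M) (hj : j ∈ M) (z : V) :
    harmonicWeight G y M j z = ∑ F ∈ rootedForests G (insert w M), ∑ u ∈ G.neighborFinset w,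
      (∏ e ∈ F, y e) * y s(w, u) *
        ((if (edgeGraph F).Reachable w u then 0 else if (edgeGraph F).Reachable z j then 1 else 0) +
          if (edgeGraph F).Reachable z w ∧ (edgeGraph F).Reachable u j then 1 else 0) := by
  rw [harmonicWeight, sum_filter, ← sum_rootedForests_insert hw]
  refine sum_congr rfl fun F hF ↦ ?_
  have hwj : ¬ (edgeGraph F).Reachable w j :=
    (mem_rootedForests.1 hF).not_reachable_of_mem hw hj
  rw [sum_filter]
  refine sum_congr rfl fun u _ ↦ ?_
  by_cases hwu : (edgeGraph F).Reachable w u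
  · have huj : ¬ (edgeGraph F).Reachable u j := fun h ↦ hwj (hwu.trans h)
    simp [hwu, huj]
  · have huF : s(w, u) ∉ F := fun h ↦ hwu (edgeGraph_reachable_of_mem h)
    have hexcl : (edgeGraph F).Reachable z j → ¬ (edgeGraph F).Reachable z w := fun hzj hzw ↦
      hwj (hzw.symm.trans hzj)
    simp only [hwu, not_false_eq_true, if_true, if_false, edgeGraph_reachable_insert_iff, hwj,
      and_false, or_false, prod_insert huF]
    by_cases hzj : (edgeGraph F).Reachable z j
    · simp [hzj, hexcl hzj, mul_comm]
    · simp [hzj, mul_comm]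

lemma harmonicWeight_root (hw : w ∉ M) (hj : j ∈ M) :
    harmonicWeight G y M j w =
      ∑ u ∈ G.neighborFinset w, y s(w, u) * harmonicWeight G y (insert w M) j u := by
  simp only [harmonicWeight_eq_sum_insert y hw hj w]
  rw [sum_comm]
  refine sum_congr rfl fun u _ ↦ ?_
  rw [harmonicWeight, sum_filter, mul_sum]
  refine sum_congr rfl fun F hF ↦ ?_
  have hwj : ¬ (edgeGraph F).Reachable w j :=
    (mem_rootedForests.1 hF).not_reachable_of_mem hw hj
  by_cases huj : (edgeGraph F).Reachable u j <;> simp [hwj, huj, mul_comm]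

open scoped Classical in
lemma weightedLaplacian_harmonicWeight (hw : w ∉ M) (hj : j ∈ M) :
    weightedLaplacian G y (harmonicWeight G y M j) w = 0 := by
  simp only [weightedLaplacian, harmonicWeight_eq_sum_insert y hw hj, ← sum_sub_distrib, mul_sum]
  rw [sum_comm]
  refine sum_eq_zero fun F hF ↦ ?_
  have hwj : ¬ (edgeGraph F).Reachable w j :=
    (mem_rootedForests.1 hF).not_reachable_of_mem hw hj
  have hju (u : V) (hwu : (edgeGraph F).Reachable w u) : ¬ (edgeGraph F).Reachable u j := fun h ↦
    hwj (hwu.trans h)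
  have hwc (u : V) : (edgeGraph F).Reachable u w ↔ (edgeGraph F).Reachable w u :=
    SimpleGraph.reachable_comm
  let T (u u' : V) : R := (∏ e ∈ F, y e) * y s(w, u) * y s(w, u') *
    if ¬ (edgeGraph F).Reachable w u ∧ (edgeGraph F).Reachable u' j then 1 else 0
  calc
    _ = ∑ u ∈ G.neighborFinset w, ∑ u' ∈ G.neighborFinset w, (T u u' - T u' u) := by
      refine sum_congr rfl fun u _ ↦ sum_congr rfl fun u' _ ↦ ?_
      by_cases hwu : (edgeGraph F).Reachable w u <;>
        by_cases hwu' : (edgeGraph F).Reachable w u' <;>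
        simp [-mul_ite, T, hwj, hwu, hwu', hwc, hju]
      ring
    _ = 0 := by simp only [sum_sub_distrib]; rw [sum_comm, sub_self]

lemma weightedLaplacian_harmonicWeight_insert (hw : w ∉ M) (hj : j ∈ M) :
    weightedLaplacian G y (harmonicWeight G y (insert w M) j) w = -harmonicWeight G y M j w := by
  have hwj : w ≠ j := fun h ↦ hw (h ▸ hj)
  rw [weightedLaplacian, harmonicWeight_root y hw hj, ← sum_neg_distrib,
    harmonicWeight_of_mem y (mem_insert_self w M) (mem_insert_of_mem hj) hwj]
  simp

omit [DecidableRel G.Adj] in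
lemma harmonicWeight_mul_harmonicWeight {c : V} (hj : j ∈ M) (hc : c ∈ M) (hjc : j ≠ c) :
    harmonicWeight G y {c} c c * harmonicWeight G y M j j =
      ∑ i ∈ M.erase j, harmonicWeight G y (M.erase i) j i * harmonicWeight G y {j, c} c i := by
  classical
  have hjc' : j ∉ ({c} : Finset V) := by simpa using hjc
  have hΔM {i : V} (hi : i ∈ M.erase j) :
      weightedLaplacian G y (harmonicWeight G y M j) i = -harmonicWeight G y (M.erase i) j i := by
    obtain ⟨hij, hi⟩ := mem_erase.1 hi
    have := weightedLaplacian_harmonicWeight_insert (G := G) y (notMem_erase i M)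
      (mem_erase.2 ⟨hij.symm, hj⟩)
    rwa [insert_erase hi] at this
  have hgreen := sum_mul_weightedLaplacian_comm (G := G) y
    (harmonicWeight G y {j, c} c) (harmonicWeight G y M j)
  have hleft :
      ∑ i, harmonicWeight G y {j, c} c i * weightedLaplacian G y (harmonicWeight G y M j) i =
        -∑ i ∈ M.erase j, harmonicWeight G y (M.erase i) j i * harmonicWeight G y {j, c} c i := by
    rw [← sum_neg_distrib, ← sum_subset (subset_univ (M.erase j))]
    · exact sum_congr rfl fun i hi ↦ by rw [hΔM hi]; ring
    · intro i _ hi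
      rcases eq_or_ne i j with rfl | hij
      · rw [harmonicWeight_of_mem y (by simp) (by simp) hjc, zero_mul]
      · rw [weightedLaplacian_harmonicWeight y (fun hiM ↦ hi (mem_erase.2 ⟨hij, hiM⟩)) hj,
          mul_zero]
  have hright :
      ∑ i, harmonicWeight G y M j i * weightedLaplacian G y (harmonicWeight G y {j, c} c) i =
        -(harmonicWeight G y {c} c c * harmonicWeight G y M j j) := by
    rw [sum_eq_single j, weightedLaplacian_harmonicWeight_insert y hjc' (by simp),
      harmonicWeight_singleton]
    · ring
    · intro i _ hij
      rcases eq_or_ne i c with rfl | hic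
      · rw [harmonicWeight_of_mem y hc hj hij, zero_mul]
      · rw [weightedLaplacian_harmonicWeight y (by simp [hij, hic]) (by simp), mul_zero]
    · simp
  rw [← neg_inj, ← hright, ← hleft, hgreen]

end HarmonicWeight

section ForestPolynomial

variable {V : Type*} [Fintype V] [DecidableEq V] {G : SimpleGraph V} {m : ℕ} {v : Fin m → V}

lemma isCompatibleForest_iff_isRootedForest (hv : Function.Injective v) {p : Fin m → Option ℕ}
    (hp : ∀ i, p i ≠ none) {ρ : Fin m → Fin m} (hρ : ∀ i, p (ρ i) = p i)
    (hρ' : ∀ i j, p i = p j → ρ i = ρ j) {F : Finset (Sym2 V)} :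
    IsCompatibleForest G v p F ↔ IsRootedForest G (univ.image (v ∘ ρ)) F ∧
      ∀ i, (edgeGraph F).Reachable (v i) (v (ρ i)) := by
  constructor
  · rintro ⟨hE, hacyc, hiff, hroot⟩
    have hrep (i : Fin m) : (edgeGraph F).Reachable (v i) (v (ρ i)) :=
      (hiff i (ρ i) (hp _) (hp _)).2 (hρ i).symm
    refine ⟨⟨hE, hacyc, ?_, fun w ↦ ?_⟩, hrep⟩
    · simp only [mem_image, mem_univ, true_and, Function.comp_apply, forall_exists_index,
        forall_apply_eq_imp_iff]
      intro i j hij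
      rw [hρ' i j (by rw [← hρ i, ← hρ j]; exact (hiff _ _ (hp _) (hp _)).1 hij)]
    · obtain ⟨i, -, hwi⟩ := hroot w
      exact ⟨v (ρ i), mem_image_of_mem _ (mem_univ i), hwi.trans (hrep i)⟩
  · rintro ⟨hF, hrep⟩
    refine ⟨hF.subset_edgeSet, hF.isAcyclic, fun i j _ _ ↦ ⟨fun hij ↦ ?_, fun hij ↦ ?_⟩, fun w ↦ ?_⟩
    · have hρij : v (ρ i) = v (ρ j) :=
        hF.eq_of_mem (mem_image_of_mem (v ∘ ρ) (mem_univ i)) (mem_image_of_mem (v ∘ ρ) (mem_univ j))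
          (hrep i) (hij.trans (hrep j))
      rw [← hρ i, hv hρij, hρ j]
    · exact (hrep i).trans (hρ' i j hij ▸ (hrep j).symm)
    · obtain ⟨a, ha, hwa⟩ := hF.exists_root w
      obtain ⟨i, -, rfl⟩ := mem_image.1 ha
      exact ⟨ρ i, hp _, hwa⟩

lemma isCompatibleForest_const_iff (hv : Function.Injective v) (c : Fin m)
    {F : Finset (Sym2 V)} :
    IsCompatibleForest G v (fun _ ↦ some 0) F ↔ IsRootedForest G {v c} F := by
  rw [isCompatibleForest_iff_isRootedForest hv (ρ := fun _ ↦ c) (by simp) (by simp) (by simp)]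
  have himage : univ.image (v ∘ fun _ ↦ c) = {v c} := image_const ⟨c, mem_univ c⟩ (v c)
  rw [himage, and_iff_left_iff_imp]
  intro hF i
  simpa using hF.exists_root (v i)

lemma isCompatibleForest_discrete_iff (hv : Function.Injective v) {F : Finset (Sym2 V)} :
    IsCompatibleForest G v (fun i ↦ some (i : ℕ)) F ↔ IsRootedForest G (univ.image v) F := by
  rw [isCompatibleForest_iff_isRootedForest hv (ρ := id) (by simp) (by simp)
    (by simp [Fin.val_inj])]
  simp

lemma partA_ne_none (s : Finset (Fin m)) (i : Fin m) : partA s i ≠ none := by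
  unfold partA
  split <;> simp

lemma partA_eq_partA_iff {s : Finset (Fin m)} {a b : Fin m} :
    partA s a = partA s b ↔ a = b ∨ (a ∈ s ∧ b ∈ s) := by
  have hne (i : Fin m) : m ≠ i := i.is_lt.ne'
  unfold partA
  split_ifs with ha hb hb <;> simp [ha, hb, Fin.val_inj, hne, (hne _).symm] <;> grind

lemma isCompatibleForest_partA_pair_iff (hv : Function.Injective v) {i j : Fin m} (hij : i ≠ j)
    {F : Finset (Sym2 V)} :
    IsCompatibleForest G v (partA {i, j}) F ↔
      IsRootedForest G ((univ.image v).erase (v i)) F ∧ (edgeGraph F).Reachable (v i) (v j) := by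
  rw [isCompatibleForest_iff_isRootedForest hv (ρ := Function.update id i j) (partA_ne_none _)]
  · have himage : univ.image (v ∘ Function.update id i j) = (univ.image v).erase (v i) := by
      ext w
      simp only [mem_image, mem_univ, true_and, Function.comp_apply, mem_erase,
        Function.update_apply, id_eq]
      constructor
      · rintro ⟨a, rfl⟩
        split_ifs with ha
        · exact ⟨hv.ne hij.symm, j, rfl⟩
        · exact ⟨hv.ne ha, a, rfl⟩
      · rintro ⟨hne, a, rfl⟩
        exact ⟨a, by rw [if_neg (ne_of_apply_ne v hne)]⟩
    rw [himage]
    refine and_congr_right fun _ ↦ ⟨fun h ↦ by simpa using h i, fun h a ↦ ?_⟩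
    rcases eq_or_ne a i with rfl | ha
    · simpa using h
    · simp [ha]
  · intro a
    rw [partA_eq_partA_iff, Function.update_apply]
    split_ifs with ha <;> simp [ha]
  · intro a b hab
    simp only [partA_eq_partA_iff, mem_insert, mem_singleton] at hab
    simp only [Function.update_apply, id_eq]
    grind

lemma partB_ne_none (S : Finset (Fin m)) (i : Fin m) : partB S i ≠ none := by
  unfold partB
  split <;> simp

lemma partB_eq_partB_iff {S : Finset (Fin m)} {a b : Fin m} :
    partB S a = partB S b ↔ (a ∈ S ↔ b ∈ S) := by
  unfold partB
  split_ifs with ha hb hb <;> simp [ha, hb]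

lemma IsCompatibleForest.reachable_iff_of_partB {S : Finset (Fin m)} {F : Finset (Sym2 V)}
    (h : IsCompatibleForest G v (partB S) F) (a b : Fin m) :
    (edgeGraph F).Reachable (v a) (v b) ↔ (a ∈ S ↔ b ∈ S) :=
  (h.2.2.1 a b (partB_ne_none S a) (partB_ne_none S b)).trans partB_eq_partB_iff

lemma IsCompatibleForest.isRootedForest_of_partB {S : Finset (Fin m)} {F : Finset (Sym2 V)}
    (h : IsCompatibleForest G v (partB S) F) {j c : Fin m} (hjc : c ∈ S ↔ j ∉ S) :
    IsRootedForest G {v j, v c} F where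
  subset_edgeSet := h.1
  isAcyclic := h.2.1
  root_unique := by
    have hnot : ¬ (edgeGraph F).Reachable (v j) (v c) := by
      rw [h.reachable_iff_of_partB, hjc]
      exact iff_not_self
    simp [hnot, SimpleGraph.reachable_comm (u := v c)]
  exists_root w := by
    obtain ⟨i, -, hwi⟩ := h.2.2.2 w
    by_cases hic : i ∈ S ↔ c ∈ S
    · exact ⟨v c, by simp, hwi.trans ((h.reachable_iff_of_partB i c).2 hic)⟩
    · exact ⟨v j, by simp, hwi.trans ((h.reachable_iff_of_partB i j).2 (by tauto))⟩

lemma existsUnique_isCompatibleForest_partB {j c : Fin m} (hjc : v j ≠ v c) {F : Finset (Sym2 V)}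
    (hF : IsRootedForest G {v j, v c} F) :
    ∃! S : BIdx m, IsCompatibleForest G v (partB S.1) F := by
  classical
  let z : Fin m := ⟨0, j.pos⟩
  let S : Finset (Fin m) := {a | (edgeGraph F).Reachable (v a) (v z)}
  have hmem (a : Fin m) : a ∈ S ↔ (edgeGraph F).Reachable (v a) (v z) := by simp [S]
  have hS : S ≠ univ := fun hS ↦ hjc <| hF.eq_of_mem (by simp) (by simp)
    ((hmem j).1 (hS ▸ mem_univ j)).symm ((hmem c).1 (hS ▸ mem_univ c)).symm
  refine ⟨⟨S, ⟨z, (hmem z).2 .rfl, rfl⟩, hS⟩, ⟨hF.subset_edgeSet, hF.isAcyclic, ?_, ?_⟩, ?_⟩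
  · intro a b _ _
    rw [partB_eq_partB_iff, hmem, hmem]
    refine ⟨fun hab ↦ ⟨hab.symm.trans, hab.trans⟩, fun hab ↦ ?_⟩
    by_cases haz : (edgeGraph F).Reachable (v a) (v z)
    · exact haz.trans (hab.1 haz).symm
    · exact hF.reachable_of_not_reachable haz fun hbz ↦ haz (hab.2 hbz)
  · intro w
    obtain ⟨a, ha, hwa⟩ := hF.exists_root w
    rcases mem_insert.1 ha with rfl | ha
    · exact ⟨j, partB_ne_none _ _, hwa⟩
    · exact ⟨c, partB_ne_none _ _, mem_singleton.1 ha ▸ hwa⟩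
  · rintro ⟨S', ⟨z', hz', hz'0⟩, hS'⟩ h
    obtain rfl : z' = z := Fin.ext hz'0
    refine Subtype.ext (Finset.ext fun a ↦ ?_)
    rw [hmem, h.reachable_iff_of_partB, iff_true_right hz']

end ForestPolynomial

section Evaluation

variable {V : Type*} [Fintype V] [DecidableEq V] {m : ℕ}

lemma map_forestPoly {R S : Type*} [CommRing R] [CommRing S] (φ : R →+* S) (G : SimpleGraph V)
    [DecidableRel G.Adj] (x : Sym2 V → R) (v : Fin m → V) (p : Fin m → Option ℕ) :
    φ (forestPoly G x v p) = forestPoly G (φ ∘ x) v p := by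
  simp [forestPoly, map_sum, apply_ite φ, map_prod]

section Field

variable {K : Type*} [Field K] {G : SimpleGraph V} [DecidableRel G.Adj] {x : Sym2 V → K}
  {v : Fin m → V}

open scoped Classical in
lemma forestPoly_eq_prod_mul_sum (hx : ∀ e, x e ≠ 0) (p : Fin m → Option ℕ) :
    forestPoly G x v p = (∏ e ∈ G.edgeFinset, x e) *
      ∑ F with IsCompatibleForest G v p F, ∏ e ∈ F, x⁻¹ e := by
  have hsub (F : Finset (Sym2 V)) (hF : IsCompatibleForest G v p F) : F ⊆ G.edgeFinset :=
    fun e he ↦ SimpleGraph.mem_edgeFinset.2 (hF.1 he)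
  have hfilter : ({F | IsCompatibleForest G v p F} : Finset (Finset (Sym2 V))) =
      {F ∈ G.edgeFinset.powerset | IsCompatibleForest G v p F} := by
    ext F
    simpa using hsub F
  rw [forestPoly, hfilter, mul_sum, sum_filter]
  refine sum_congr rfl fun F _ ↦ ?_
  split_ifs with hF
  · have hcancel : (∏ e ∈ F, x e) * ∏ e ∈ F, x⁻¹ e = 1 := by
      rw [← prod_mul_distrib]
      exact prod_eq_one fun e _ ↦ mul_inv_cancel₀ (hx e)
    rw [← prod_sdiff (hsub F hF), mul_assoc, hcancel, mul_one]
  · rfl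

lemma forestPoly_const_eq (hx : ∀ e, x e ≠ 0) (hv : Function.Injective v) (c : Fin m) :
    forestPoly G x v (fun _ ↦ some 0) =
      (∏ e ∈ G.edgeFinset, x e) * harmonicWeight G x⁻¹ {v c} (v c) (v c) := by
  rw [forestPoly_eq_prod_mul_sum hx, harmonicWeight_self]
  congr 2
  ext F
  simp [isCompatibleForest_const_iff hv c]

lemma forestPoly_discrete_eq (hx : ∀ e, x e ≠ 0) (hv : Function.Injective v) (j : Fin m) :
    forestPoly G x v (fun i ↦ some (i : ℕ)) =
      (∏ e ∈ G.edgeFinset, x e) * harmonicWeight G x⁻¹ (univ.image v) (v j) (v j) := by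
  rw [forestPoly_eq_prod_mul_sum hx, harmonicWeight_self]
  congr 2
  ext F
  simp [isCompatibleForest_discrete_iff hv]

lemma forestPoly_partA_pair_eq (hx : ∀ e, x e ≠ 0) (hv : Function.Injective v) {i j : Fin m}
    (hij : i ≠ j) :
    forestPoly G x v (partA {i, j}) = (∏ e ∈ G.edgeFinset, x e) *
      harmonicWeight G x⁻¹ ((univ.image v).erase (v i)) (v j) (v i) := by
  rw [forestPoly_eq_prod_mul_sum hx, harmonicWeight]
  congr 2
  ext F
  simp [isCompatibleForest_partA_pair_iff hv hij]

lemma sum_forestPoly_partB_eq (hx : ∀ e, x e ≠ 0) (hv : Function.Injective v) {j c : Fin m}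
    (hjc : j ≠ c) (i : Fin m) :
    ∑ S : BIdx m with (c ∈ S.1 ↔ j ∉ S.1) ∧ (i ∈ S.1 ↔ j ∉ S.1), forestPoly G x v (partB S.1) =
      (∏ e ∈ G.edgeFinset, x e) * harmonicWeight G x⁻¹ {v j, v c} (v c) (v i) := by
  classical
  simp only [forestPoly_eq_prod_mul_sum hx]
  rw [← mul_sum, harmonicWeight]
  congr 1
  rw [sum_comm' (t' := {F ∈ rootedForests G {v j, v c} | (edgeGraph F).Reachable (v i) (v c)})
    (s' := fun F ↦ {S | IsCompatibleForest G v (partB S.1) F})]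
  · refine sum_congr rfl fun F hF ↦ ?_
    rw [sum_const, card_eq_one.2, one_smul]
    rw [mem_filter, mem_rootedForests] at hF
    obtain ⟨S, hS, hunique⟩ := existsUnique_isCompatibleForest_partB (hv.ne hjc) hF.1
    exact ⟨S, eq_singleton_iff_unique_mem.2 ⟨by simpa using hS, by simpa using hunique⟩⟩
  · intro S F
    simp only [mem_filter, mem_univ, true_and, mem_rootedForests]
    constructor
    · rintro ⟨⟨hc, hi⟩, h⟩
      exact ⟨h, h.isRootedForest_of_partB hc, (h.reachable_iff_of_partB i c).2 (hi.trans hc.symm)⟩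
    · rintro ⟨h, hF, hic⟩
      have hc : ¬ (j ∈ S.1 ↔ c ∈ S.1) := (h.reachable_iff_of_partB j c).not.1 fun hjc' ↦
        hjc (hv (hF.root_unique _ (by simp) _ (by simp) hjc'))
      have hic := (h.reachable_iff_of_partB i c).1 hic
      exact ⟨⟨by tauto, by tauto⟩, h⟩

lemma forestPoly_const_mul_forestPoly_discrete_of_field (hx : ∀ e, x e ≠ 0)
    (hv : Function.Injective v) {j c : Fin m} (hjc : j ≠ c) :
    forestPoly G x v (fun _ ↦ some 0) * forestPoly G x v (fun i ↦ some (i : ℕ)) =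
      ∑ i ∈ univ.erase j, forestPoly G x v (partA {i, j}) *
        ∑ S : BIdx m with (c ∈ S.1 ↔ j ∉ S.1) ∧ (i ∈ S.1 ↔ j ∉ S.1),
          forestPoly G x v (partB S.1) := by
  have himage : ((univ : Finset (Fin m)).erase j).image v = (univ.image v).erase (v j) := by
    rw [image_erase hv]
  have hmem (i : Fin m) : v i ∈ univ.image v := mem_image_of_mem v (mem_univ i)
  rw [forestPoly_const_eq hx hv c, forestPoly_discrete_eq hx hv j, mul_mul_mul_comm,
    harmonicWeight_mul_harmonicWeight _ (hmem j) (hmem c) (hv.ne hjc), ← himage,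
    sum_image hv.injOn, mul_sum]
  refine sum_congr rfl fun i hi ↦ ?_
  rw [forestPoly_partA_pair_eq hx hv (ne_of_mem_erase hi), sum_forestPoly_partB_eq hx hv hjc]
  ring

end Field

lemma forestPoly_const_mul_forestPoly_discrete {R : Type*} [CommRing R] (G : SimpleGraph V)
    [DecidableRel G.Adj] (x : Sym2 V → R) {v : Fin m → V} (hv : Function.Injective v)
    {j c : Fin m} (hjc : j ≠ c) :
    forestPoly G x v (fun _ ↦ some 0) * forestPoly G x v (fun i ↦ some (i : ℕ)) =
      ∑ i ∈ univ.erase j, forestPoly G x v (partA {i, j}) *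
        ∑ S : BIdx m with (c ∈ S.1 ↔ j ∉ S.1) ∧ (i ∈ S.1 ↔ j ∉ S.1),
          forestPoly G x v (partB S.1) := by
  let P := MvPolynomial (Sym2 V) ℤ
  let ι : P →+* FractionRing P := algebraMap P (FractionRing P)
  have hι : Function.Injective ι := IsFractionRing.injective P (FractionRing P)
  have generic := forestPoly_const_mul_forestPoly_discrete_of_field (G := G)
    (x := ι ∘ (MvPolynomial.X : Sym2 V → P))
    (fun e ↦ (map_ne_zero_iff ι hι).2 (MvPolynomial.X_ne_zero e)) hv hjc
  simp only [← map_forestPoly, ← map_mul, ← map_sum] at generic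
  have heval : MvPolynomial.eval₂Hom (Int.castRingHom R) x ∘ MvPolynomial.X = x :=
    funext fun e ↦ MvPolynomial.eval₂Hom_X' _ _ e
  have evaluated := congrArg (MvPolynomial.eval₂Hom (Int.castRingHom R) x) (hι generic)
  simpa only [map_mul, map_sum, map_forestPoly, heval] using evaluated

end Evaluation

section ColumnExpansion

variable {R : Type*} {m : ℕ}

lemma AIdx.sum_filter_mem [AddCommMonoid R] (j : Fin m) (g : Finset (Fin m) → R) :
    ∑ s : AIdx m with j ∈ s.1, g s.1 = ∑ i ∈ univ.erase j, g {i, j} := by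
  refine (sum_bij (fun i hi ↦ ⟨{i, j}, card_pair (ne_of_mem_erase hi)⟩) ?_ ?_ ?_ ?_).symm
  · exact fun i _ ↦ mem_filter.2 ⟨mem_univ _, mem_insert_of_mem (mem_singleton_self j)⟩
  · intro i hi i' _ h
    have hpair : ({i, j} : Finset (Fin m)) = {i', j} := Subtype.ext_iff.1 h
    have hmem : i ∈ ({i', j} : Finset (Fin m)) := hpair ▸ mem_insert_self i {j}
    simpa [ne_of_mem_erase hi] using hmem
  · rintro ⟨s, hs⟩ hj
    obtain ⟨a, b, hab, rfl⟩ := card_eq_two.1 hs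
    rcases (by simpa using (mem_filter.1 hj).2 : j = a ∨ j = b) with rfl | rfl
    · exact ⟨b, by simp [hab.symm], Subtype.ext (pair_comm _ _)⟩
    · exact ⟨a, by simp [hab], rfl⟩
  · exact fun _ _ ↦ rfl

variable [CommRing R]

/-- The coefficients of the identity `L_{m,c}(j)`, which expands `Φ_{(1,…,1)} Φ_{(1,2,…,m)}` along
column `j`: the products `A_{i,j} B_S` for which `S` separates `j` from both `c` and `i`. -/
def columnExpansion (R : Type*) [CommRing R] {m : ℕ} (j c : Fin m) (q : AIdx m × BIdx m) : R :=
  if j ∈ q.1.1 ∧ ∀ k ∈ insert c (q.1.1.erase j), k ∈ q.2.1 ↔ j ∉ q.2.1 then 1 else 0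

lemma sum_columnExpansion_mul (a b : Finset (Fin m) → R) {j : Fin m} (c : Fin m) :
    ∑ q : AIdx m × BIdx m, columnExpansion R j c q * (a q.1.1 * b q.2.1) =
      ∑ i ∈ univ.erase j, a {i, j} *
        ∑ S : BIdx m with (c ∈ S.1 ↔ j ∉ S.1) ∧ (i ∈ S.1 ↔ j ∉ S.1), b S.1 := by
  calc
    _ = ∑ s : AIdx m with j ∈ s.1, a s.1 *
          ∑ S : BIdx m with ∀ k ∈ insert c (s.1.erase j), k ∈ S.1 ↔ j ∉ S.1, b S.1 := by
      rw [Fintype.sum_prod_type, sum_filter]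
      refine sum_congr rfl fun s _ ↦ ?_
      split_ifs with hj
      · simp [columnExpansion, hj, sum_filter, mul_sum]
      · simp [columnExpansion, hj]
    _ = _ := by
      rw [AIdx.sum_filter_mem j fun s ↦ a s *
        ∑ S : BIdx m with ∀ k ∈ insert c (s.erase j), k ∈ S.1 ↔ j ∉ S.1, b S.1]
      refine sum_congr rfl fun i hi ↦ ?_
      have herase : ({i, j} : Finset (Fin m)).erase j = {i} := by
        rw [pair_comm, erase_insert (by simpa using (ne_of_mem_erase hi).symm)]
      simp [herase]

theorem forestPoly_const_mul_forestPoly_discrete_eq_sum {V : Type*} [Fintype V] [DecidableEq V]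
    (G : SimpleGraph V) [DecidableRel G.Adj] (x : Sym2 V → R) {v : Fin m → V}
    (hv : Function.Injective v) {j c : Fin m} (hjc : j ≠ c) :
    forestPoly G x v (fun _ ↦ some 0) * forestPoly G x v (fun i ↦ some (i : ℕ)) =
      ∑ q : AIdx m × BIdx m, columnExpansion R j c q *
        (forestPoly G x v (partA q.1.1) * forestPoly G x v (partB q.2.1)) := by
  rw [forestPoly_const_mul_forestPoly_discrete G x hv hjc,
    sum_columnExpansion_mul (fun s ↦ forestPoly G x v (partA s))
      (fun S ↦ forestPoly G x v (partB S))]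

end ColumnExpansion

section FundamentalCut

variable {V : Type*} {G : SimpleGraph V} {f : Sym2 V} {S : Finset V}

/-- `f` is the only edge of `G` joining `S` to its complement. For a tree `G` and an edge `f`, the
fundamental cut of `f` is one of the two components of `G - f`. -/
def IsFundamentalCut (G : SimpleGraph V) (f : Sym2 V) (S : Finset V) : Prop :=
  ∀ a b, G.Adj a b → ((a ∈ S ↔ b ∈ S) ↔ s(a, b) ≠ f)

namespace IsFundamentalCut

lemma mem_iff_of_reachable (h : IsFundamentalCut G f S) {F : Finset (Sym2 V)}
    (hF : (F : Set (Sym2 V)) ⊆ G.edgeSet) (hf : f ∉ F) {a b : V}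
    (hab : (edgeGraph F).Reachable a b) : a ∈ S ↔ b ∈ S := by
  rw [SimpleGraph.reachable_iff_reflTransGen] at hab
  induction hab with
  | refl => rfl
  | tail _ hbc ih =>
    obtain ⟨hmem, -⟩ := (SimpleGraph.fromEdgeSet_adj _).1 hbc
    exact ih.trans ((h _ _ (hF hmem)).2 fun heq ↦ hf (heq ▸ hmem))

variable [Fintype V] [DecidableEq V] [DecidableRel G.Adj]

lemma reachable_erase_iff (h : IsFundamentalCut G f S) (hG : G.Connected)
    (hf : f ∈ G.edgeFinset) {a b : V} :
    (edgeGraph (G.edgeFinset.erase f)).Reachable a b ↔ (a ∈ S ↔ b ∈ S) := by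
  have hpreserve {a b : V} := h.mem_iff_of_reachable (F := G.edgeFinset.erase f) (a := a) (b := b)
    (by simp) (notMem_erase _ _)
  refine ⟨hpreserve, fun hab ↦ ?_⟩
  induction f with
  | _ u w =>
    have huw : ¬ (u ∈ S ↔ w ∈ S) := fun huw ↦
      (h u w (SimpleGraph.mem_edgeFinset.1 hf)).1 huw rfl
    have hreach : (edgeGraph G.edgeFinset).Reachable a b := by
      simpa [edgeGraph] using hG.preconnected a b
    rw [← insert_erase hf, edgeGraph_reachable_insert_iff] at hreach
    rcases hreach with hreach | ⟨hau, hwb⟩ | ⟨haw, hub⟩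
    · exact hreach
    · have := hpreserve hau
      have := hpreserve hwb
      tauto
    · have := hpreserve haw
      have := hpreserve hub
      tauto

end IsFundamentalCut

lemma edgeGraph_isAcyclic_of_isFundamentalCut {F : Finset (Sym2 V)}
    (hF : (F : Set (Sym2 V)) ⊆ G.edgeSet) (h : ∀ e ∈ F, ∃ S, IsFundamentalCut G e S) :
    (edgeGraph F).IsAcyclic := by
  classical
  rw [SimpleGraph.isAcyclic_iff_forall_adj_isBridge]
  intro a b hab
  obtain ⟨hmem, -⟩ := (SimpleGraph.fromEdgeSet_adj _).1 hab
  obtain ⟨S, hS⟩ := h _ hmem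
  rw [SimpleGraph.isBridge_iff, ← edgeGraph_erase]
  intro hreach
  exact (hS a b (hF hmem)).1 (hS.mem_iff_of_reachable
    ((Finset.coe_subset.2 (erase_subset _ _)).trans hF) (notMem_erase _ _) hreach) rfl

end FundamentalCut

section TreeEvaluation

variable {m : ℕ} {G : SimpleGraph (Fin m)}

lemma isCompatibleForest_id_partA_iff {s : Finset (Fin m)} (hs : #s = 2)
    {F : Finset (Sym2 (Fin m))} :
    IsCompatibleForest G id (partA s) F ↔ ∃ e ∈ G.edgeSet, s = e.toFinset ∧ F = {e} := by
  obtain ⟨i, j, hij, rfl⟩ := card_eq_two.1 hs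
  constructor
  · rintro ⟨hF, -, hiff, -⟩
    have hreach (a b : Fin m) : (edgeGraph F).Reachable a b ↔
        a = b ∨ (a ∈ ({i, j} : Finset (Fin m)) ∧ b ∈ ({i, j} : Finset (Fin m))) :=
      (hiff a b (partA_ne_none _ _) (partA_ne_none _ _)).trans partA_eq_partA_iff
    have hedge (e : Sym2 (Fin m)) (he : e ∈ F) : e = s(i, j) := by
      induction e with
      | _ a b =>
        have hab : a ≠ b := ((SimpleGraph.mem_edgeSet G).1 (hF he)).ne
        have := (hreach a b).1 (edgeGraph_reachable_of_mem he)
        simp only [hab, false_or, mem_insert, mem_singleton] at this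
        grind
    have hFne : F.Nonempty := by
      rw [nonempty_iff_ne_empty]
      rintro rfl
      have := (hreach i j).2 (by simp)
      simp [edgeGraph_empty, hij] at this
    have hFeq : F = {s(i, j)} := eq_singleton_iff_nonempty_unique_mem.2 ⟨hFne, hedge⟩
    exact ⟨s(i, j), hF (by simp [hFeq]), Sym2.toFinset_mk_eq.symm, hFeq⟩
  · rintro ⟨e, he, hes, rfl⟩
    induction e with
    | _ a b =>
      have hreach (c d : Fin m) : (edgeGraph {s(a, b)}).Reachable c d ↔
          c = d ∨ (c = a ∧ b = d) ∨ (c = b ∧ a = d) := by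
        rw [← insert_empty_eq, edgeGraph_reachable_insert_iff, edgeGraph_empty]
        simp
      refine ⟨by simpa using he, ?_, fun c d _ _ ↦ ?_, fun w ↦ ⟨w, partA_ne_none _ _, .rfl⟩⟩
      · rw [← insert_empty_eq]
        refine edgeGraph_isAcyclic_insert ?_ ?_
        · simp [edgeGraph_empty]
        · simpa [edgeGraph_empty] using SimpleGraph.Adj.ne he
      · rw [id, id, hreach, partA_eq_partA_iff, hes, Sym2.toFinset_mk_eq]
        simp only [mem_insert, mem_singleton]
        grind

lemma IsCompatibleForest.exists_eq_erase [DecidableRel G.Adj] (hG : G.Connected)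
    (hcut : ∀ e ∈ G.edgeFinset, ∃ T, IsFundamentalCut G e T) {S : Finset (Fin m)}
    (hS : S.Nonempty) (hS' : S ≠ univ) {F : Finset (Sym2 (Fin m))}
    (h : IsCompatibleForest G id (partB S) F) : ∃ f ∈ G.edgeFinset, F = G.edgeFinset.erase f := by
  have hF : F ⊆ G.edgeFinset := fun e he ↦ SimpleGraph.mem_edgeFinset.2 (h.1 he)
  have hFne : F ≠ G.edgeFinset := by
    rintro rfl
    obtain ⟨a, ha⟩ := hS
    obtain ⟨b, hb⟩ : ∃ b, b ∉ S := by simpa [eq_univ_iff_forall] using hS'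
    exact hb (((h.reachable_iff_of_partB a b).1
      (by simpa [edgeGraph] using hG.preconnected a b)).1 ha)
  obtain ⟨f, hf, hfF⟩ := exists_of_ssubset (hF.ssubset_of_ne hFne)
  refine ⟨f, hf, (subset_erase.2 ⟨hF, hfF⟩).antisymm fun g hg ↦ ?_⟩
  -- If `g ≠ f` were missing too, the cuts of `f` and of `g` would both be `{S, Sᶜ}`, although `g`
  -- does not cross the cut of `f`.
  by_contra hgF
  obtain ⟨hgf, hgE⟩ := mem_erase.1 hg
  obtain ⟨T, hT⟩ := hcut f hf
  obtain ⟨T', hT'⟩ := hcut g hgE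
  have hmono (a b : Fin m) (hab : a ∈ S ↔ b ∈ S) : (a ∈ T ↔ b ∈ T) ∧ (a ∈ T' ↔ b ∈ T') :=
    ⟨hT.mem_iff_of_reachable h.1 hfF ((h.reachable_iff_of_partB a b).2 hab),
      hT'.mem_iff_of_reachable h.1 hgF ((h.reachable_iff_of_partB a b).2 hab)⟩
  obtain ⟨a, b⟩ := f
  obtain ⟨c, d⟩ := g
  have hab : ¬ (a ∈ T ↔ b ∈ T) := fun hab ↦
    (hT a b (SimpleGraph.mem_edgeFinset.1 hf)).1 hab rfl
  have hcd : c ∈ T ↔ d ∈ T := (hT c d (SimpleGraph.mem_edgeFinset.1 hgE)).2 hgf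
  have hcd' : ¬ (c ∈ T' ↔ d ∈ T') := fun hcd ↦
    (hT' c d (SimpleGraph.mem_edgeFinset.1 hgE)).1 hcd rfl
  have habS : ¬ (a ∈ S ↔ b ∈ S) := fun habS ↦ hab (hmono a b habS).1
  have hcdS : ¬ (c ∈ S ↔ d ∈ S) := fun hcdS ↦ hcd' (hmono c d hcdS).2
  by_cases hac : a ∈ S ↔ c ∈ S
  · have hbd : b ∈ S ↔ d ∈ S := by grind
    exact hab ((hmono a c hac).1.trans (hcd.trans (hmono b d hbd).1.symm))
  · have had : a ∈ S ↔ d ∈ S := by grind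
    have hbc : b ∈ S ↔ c ∈ S := by grind
    exact hab ((hmono a d had).1.trans (hcd.symm.trans (hmono b c hbc).1.symm))

lemma forestPoly_eq_sum_of_forall_iff {V R ι : Type*} [Fintype V] [DecidableEq V] [CommRing R]
    {G : SimpleGraph V} [DecidableRel G.Adj] {x : Sym2 V → R} {v : Fin m → V}
    {p : Fin m → Option ℕ} {I : Finset ι} {φ : ι → Finset (Sym2 V)} (hφ : Set.InjOn φ I)
    (h : ∀ F, IsCompatibleForest G v p F ↔ ∃ e ∈ I, φ e = F) :
    forestPoly G x v p = ∑ e ∈ I, ∏ e' ∈ G.edgeFinset \ φ e, x e' := by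
  classical
  rw [forestPoly, ← sum_image (f := fun F ↦ ∏ e' ∈ G.edgeFinset \ F, x e') hφ, ← sum_filter]
  refine sum_congr (Finset.ext fun F ↦ ?_) fun _ _ ↦ rfl
  simp only [mem_filter, mem_powerset, mem_image, h, and_iff_right_iff_imp]
  intro hF e he
  exact SimpleGraph.mem_edgeFinset.2 (((h F).2 hF).1 he)

variable [DecidableRel G.Adj] {R : Type*} [CommRing R] (x : Sym2 (Fin m) → R)

lemma forestPoly_id_partA {s : Finset (Fin m)} (hs : #s = 2) :
    forestPoly G x id (partA s) =
      ∑ e ∈ G.edgeFinset with s = e.toFinset, ∏ e' ∈ G.edgeFinset.erase e, x e' := by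
  rw [forestPoly_eq_sum_of_forall_iff (I := {e ∈ G.edgeFinset | s = e.toFinset})
    (φ := fun e ↦ {e}) (by simp) fun F ↦ ?_]
  · simp only [erase_eq]
  · simp [isCompatibleForest_id_partA_iff hs, and_assoc, eq_comm]

variable {σ : Sym2 (Fin m) → Finset (Fin m)}

lemma isCompatibleForest_id_partB_iff (hG : G.Connected)
    (hσ : ∀ e ∈ G.edgeFinset, IsFundamentalCut G e (σ e)) (S : BIdx m)
    {F : Finset (Sym2 (Fin m))} : IsCompatibleForest G id (partB S.1) F ↔
      ∃ f ∈ G.edgeFinset, (S.1 = σ f ∨ S.1 = (σ f)ᶜ) ∧ F = G.edgeFinset.erase f := by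
  obtain ⟨⟨z, hz, -⟩, hS⟩ := S.2
  constructor
  · intro h
    obtain ⟨f, hf, rfl⟩ := h.exists_eq_erase hG (fun e he ↦ ⟨σ e, hσ e he⟩) ⟨z, hz⟩ hS
    have hmem (a b : Fin m) : (a ∈ S.1 ↔ b ∈ S.1) ↔ (a ∈ σ f ↔ b ∈ σ f) := by
      rw [← h.reachable_iff_of_partB, ← (hσ f hf).reachable_erase_iff hG hf]
      rfl
    refine ⟨f, hf, ?_, rfl⟩
    by_cases hzf : z ∈ σ f
    · exact .inl (Finset.ext fun a ↦ by simpa [hz, hzf] using hmem a z)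
    · exact .inr (Finset.ext fun a ↦ by simpa [hz, hzf] using hmem a z)
  · rintro ⟨f, hf, hSf, rfl⟩
    have hE : ((G.edgeFinset.erase f : Finset _) : Set (Sym2 (Fin m))) ⊆ G.edgeSet := by simp
    refine ⟨hE, edgeGraph_isAcyclic_of_isFundamentalCut hE fun e he ↦
      ⟨σ e, hσ e (mem_of_mem_erase he)⟩, fun a b _ _ ↦ ?_,
      fun w ↦ ⟨w, partB_ne_none _ _, .rfl⟩⟩
    rw [partB_eq_partB_iff]
    refine ((hσ f hf).reachable_erase_iff hG hf).trans ?_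
    rcases hSf with h | h <;> simp [h, not_iff_not]

lemma forestPoly_id_partB (hG : G.Connected)
    (hσ : ∀ e ∈ G.edgeFinset, IsFundamentalCut G e (σ e)) (S : BIdx m) :
    forestPoly G x id (partB S.1) =
      ∑ f ∈ G.edgeFinset with S.1 = σ f ∨ S.1 = (σ f)ᶜ, x f := by
  rw [forestPoly_eq_sum_of_forall_iff
    (I := {f ∈ G.edgeFinset | S.1 = σ f ∨ S.1 = (σ f)ᶜ}) (φ := G.edgeFinset.erase)
    ((erase_injOn _).mono (by simp)) fun F ↦ ?_]
  · refine sum_congr rfl fun f hf ↦ ?_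
    rw [sdiff_erase_self (mem_filter.1 hf).1, prod_singleton]
  · simp [isCompatibleForest_id_partB_iff hG hσ, and_assoc, eq_comm]

end TreeEvaluation

section CoefficientExtraction

variable {ι R : Type*} [DecidableEq ι] [CommRing R] {I : Finset ι} {T : ι → ι → R}

lemma eq_zero_of_sum_prod_erase_mul_eq_zero (h2 : IsRegular (2 : R))
    (h : ∀ z : ι → R, ∑ c ∈ I, ∑ d ∈ I, T c d * ((∏ k ∈ I.erase c, z k) * z d) = 0) {a b : ι}
    (ha : a ∈ I) (hb : b ∈ I) (hab : a ≠ b) : T a b = 0 := by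
  have hrow (z : ι → R) (hza : z a = 0) :
      (∏ k ∈ I.erase a, z k) * ∑ d ∈ I, T a d * z d = 0 := by
    have hz := h z
    rw [sum_eq_single_of_mem a ha fun c _ hca ↦ sum_eq_zero fun d _ ↦ by
      rw [prod_eq_zero (mem_erase.2 ⟨hca.symm, ha⟩) hza, zero_mul, mul_zero]] at hz
    rw [← hz, mul_sum]
    exact sum_congr rfl fun d _ ↦ by ring
  let z (r : R) : ι → R := Function.update (Function.update 1 b r) a 0
  have hz (r : R) : r * (∑ d ∈ (I.erase a).erase b, T a d + T a b * r) = 0 := by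
    have hbI : b ∈ I.erase a := mem_erase.2 ⟨hab.symm, hb⟩
    have hzb : z r b = r := by simp [z, hab.symm]
    have hz1 (d : ι) (hd : d ∈ (I.erase a).erase b) : z r d = 1 := by
      simp only [mem_erase] at hd
      simp [z, hd]
    have := hrow (z r) (by simp [z])
    rw [← prod_erase_mul _ _ hbI, prod_congr rfl hz1, ← sum_erase_add _ _ ha,
      ← sum_erase_add _ _ hbI, sum_congr rfl fun d hd ↦ by rw [hz1 d hd]] at this
    simpa [hzb, show z r a = 0 by simp [z]] using this
  refine h2.left ?_
  linear_combination hz 1 + hz (-1)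

lemma sum_diag_eq_zero_of_sum_prod_erase_mul_eq_zero (h2 : IsRegular (2 : R))
    (h : ∀ z : ι → R, ∑ c ∈ I, ∑ d ∈ I, T c d * ((∏ k ∈ I.erase c, z k) * z d) = 0) :
    ∑ c ∈ I, T c c = 0 := by
  rw [← h 1]
  refine sum_congr rfl fun c hc ↦ ?_
  rw [sum_eq_single_of_mem c hc fun d hd hdc ↦ by
    rw [eq_zero_of_sum_prod_erase_mul_eq_zero h2 h hc hd hdc.symm, zero_mul]]
  simp

end CoefficientExtraction

section QuadraticRelations

variable {R : Type*} [CommRing R] {m : ℕ}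

/-- The space `X_m` with coefficients in `R`: the combinations of the products `A_i B_j` vanishing
on all graphs with `m` marked vertices. For `R = ℚ` membership is `MemX`. -/
def quadraticRelations (R : Type*) [CommRing R] (m : ℕ) : Submodule R (AIdx m × BIdx m → R) where
  carrier := {α | ∀ (V : Type) [Fintype V] [DecidableEq V] (G : SimpleGraph V) [DecidableRel G.Adj]
    (x : Sym2 V → R) (v : Fin m → V), Function.Injective v →
    ∑ q : AIdx m × BIdx m, α q *
      (forestPoly G x v (partA q.1.val) * forestPoly G x v (partB q.2.val)) = 0}
  add_mem' hα hβ V _ _ G _ x v hv := by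
    simp [add_mul, sum_add_distrib, hα V G x v hv, hβ V G x v hv]
  zero_mem' V _ _ G _ x v _ := by simp
  smul_mem' r α hα V _ _ G _ x v hv := by
    simp [mul_assoc, ← mul_sum, hα V G x v hv]

/-- The coefficient of the product of `A_s` and the 2-part partition `{S, Sᶜ}`. The junk value is
`0` if `s` does not have two elements or `S` is empty or everything. -/
noncomputable def coeffAt (R : Type*) [CommRing R] {m : ℕ} (s S : Finset (Fin m)) :
    Module.Dual R (AIdx m × BIdx m → R) :=
  ∑ q with q.1.1 = s ∧ (q.2.1 = S ∨ q.2.1 = Sᶜ), LinearMap.proj q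

lemma coeffAt_compl (s S : Finset (Fin m)) : coeffAt R s Sᶜ = coeffAt R s S := by
  simp [coeffAt, or_comm]

lemma coeffAt_apply (s S : Finset (Fin m)) (α : AIdx m × BIdx m → R) :
    coeffAt R s S α =
      ∑ q : AIdx m × BIdx m, if q.1.1 = s ∧ (q.2.1 = S ∨ q.2.1 = Sᶜ) then α q else 0 := by
  rw [coeffAt, LinearMap.sum_apply, sum_filter]
  rfl

lemma BIdx.ne_compl (S T : BIdx m) : S.1 ≠ T.1ᶜ := by
  obtain ⟨⟨z, hz, hz0⟩, -⟩ := S.2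
  obtain ⟨⟨z', hz', hz0'⟩, -⟩ := T.2
  obtain rfl : z = z' := Fin.ext (hz0.trans hz0'.symm)
  intro h
  rw [h] at hz
  exact mem_compl.1 hz hz'

lemma coeffAt_self (q : AIdx m × BIdx m) (α : AIdx m × BIdx m → R) :
    coeffAt R q.1.1 q.2.1 α = α q := by
  rw [coeffAt_apply, sum_eq_single_of_mem q (mem_univ q)]
  · simp
  · intro q' _ hq'
    refine if_neg fun h ↦ hq' ?_
    exact Prod.ext (Subtype.ext h.1) (Subtype.ext (h.2.resolve_right (BIdx.ne_compl _ _)))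

variable {α : AIdx m × BIdx m → R} {G : SimpleGraph (Fin m)} {E : Finset (Sym2 (Fin m))}
  {σ : Sym2 (Fin m) → Finset (Fin m)}

lemma sum_coeffAt_mul_eq_zero (hα : α ∈ quadraticRelations R m) (hG : G.Connected)
    (hE : (E : Set (Sym2 (Fin m))) = G.edgeSet) (hσ : ∀ e ∈ E, IsFundamentalCut G e (σ e))
    (x : Sym2 (Fin m) → R) :
    ∑ e ∈ E, ∑ f ∈ E,
      coeffAt R e.toFinset (σ f) α * ((∏ e' ∈ E.erase e, x e') * x f) = 0 := by
  classical
  obtain rfl : E = G.edgeFinset := coe_injective (hE.trans G.coe_edgeFinset.symm)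
  rw [← hα (Fin m) G x id Function.injective_id]
  simp only [coeffAt_apply, sum_mul]
  rw [sum_congr rfl fun e _ ↦ sum_comm, sum_comm]
  refine sum_congr rfl fun q _ ↦ ?_
  rw [forestPoly_id_partA x q.1.2, forestPoly_id_partB x hG hσ, sum_filter, sum_filter,
    sum_mul_sum, mul_sum]
  refine sum_congr rfl fun e _ ↦ ?_
  rw [mul_sum]
  refine sum_congr rfl fun f _ ↦ ?_
  split_ifs <;> first | rfl | simp_all

lemma coeffAt_eq_zero_of_isFundamentalCut (h2 : IsRegular (2 : R))
    (hα : α ∈ quadraticRelations R m) (hG : G.Connected)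
    (hE : (E : Set (Sym2 (Fin m))) = G.edgeSet) (hσ : ∀ e ∈ E, IsFundamentalCut G e (σ e))
    {e f : Sym2 (Fin m)} (he : e ∈ E) (hf : f ∈ E) (hef : e ≠ f) :
    coeffAt R e.toFinset (σ f) α = 0 :=
  eq_zero_of_sum_prod_erase_mul_eq_zero (T := fun e f ↦ coeffAt R e.toFinset (σ f) α) h2
    (sum_coeffAt_mul_eq_zero hα hG hE hσ) he hf hef

lemma sum_coeffAt_eq_zero_of_isFundamentalCut (h2 : IsRegular (2 : R))
    (hα : α ∈ quadraticRelations R m) (hG : G.Connected)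
    (hE : (E : Set (Sym2 (Fin m))) = G.edgeSet) (hσ : ∀ e ∈ E, IsFundamentalCut G e (σ e)) :
    ∑ e ∈ E, coeffAt R e.toFinset (σ e) α = 0 :=
  sum_diag_eq_zero_of_sum_prod_erase_mul_eq_zero
    (T := fun e f ↦ coeffAt R e.toFinset (σ f) α) h2 (sum_coeffAt_mul_eq_zero hα hG hE hσ)

end QuadraticRelations

section DoubleStar

variable {V : Type*} [Fintype V] [DecidableEq V] {i j : V} {S : Finset V}

/-- The edge set of the double star with centres `i` and `j`, in which the leaves in `S` hang off
`i` and the leaves outside `S` hang off `j`. -/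
def doubleStar (i j : V) (S : Finset V) : Finset (Sym2 V) :=
  insert s(i, j) (({i, j}ᶜ : Finset V).image fun c ↦ s(c, if c ∈ S then i else j))

/-- The fundamental cuts of the double star with centres `i ∈ S` and `j ∉ S`: the central edge has
`S`, the edge of a leaf `c` has `{c}`. -/
def doubleStarCut (i j : V) (S : Finset V) (e : Sym2 V) : Finset V :=
  if e = s(i, j) then S else e.toFinset \ {i, j}

lemma edgeSet_doubleStar (hij : i ≠ j) :
    (edgeGraph (doubleStar i j S)).edgeSet = doubleStar i j S := by
  rw [SimpleGraph.edgeSet_fromEdgeSet, sdiff_eq_left, Set.disjoint_left]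
  simp only [doubleStar, mem_coe, mem_insert, mem_image, mem_compl, mem_singleton]
  rintro e (rfl | ⟨c, hc, rfl⟩)
  · simpa using hij
  · rw [Sym2.mem_diagSet, Sym2.mk_isDiag_iff]
    grind

lemma connected_doubleStar : (edgeGraph (doubleStar i j S)).Connected := by
  have hij : (edgeGraph (doubleStar i j S)).Reachable i j :=
    edgeGraph_reachable_of_mem (mem_insert_self _ _)
  rw [SimpleGraph.connected_iff_exists_forall_reachable]
  refine ⟨i, fun c ↦ ?_⟩
  by_cases hc : c ∈ ({i, j} : Finset V)
  · rcases mem_insert.1 hc with rfl | hc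
    · rfl
    · rwa [mem_singleton.1 hc]
  · have hleaf : (edgeGraph (doubleStar i j S)).Reachable c (if c ∈ S then i else j) :=
      edgeGraph_reachable_of_mem
        (mem_insert_of_mem (mem_image.2 ⟨c, mem_compl.2 hc, rfl⟩))
    split_ifs at hleaf
    · exact hleaf.symm
    · exact hij.trans hleaf.symm

lemma sum_doubleStar {M : Type*} [AddCommMonoid M] (g : Sym2 V → M) :
    ∑ e ∈ doubleStar i j S, g e =
      g s(i, j) + ∑ c ∈ {i, j}ᶜ, g s(c, if c ∈ S then i else j) := by
  rw [doubleStar, sum_insert, sum_image]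
  · intro c hc d hd hcd
    simp only [coe_compl, Set.mem_compl_iff, mem_coe, mem_insert, mem_singleton] at hc hd
    simp only [Sym2.eq_iff] at hcd
    grind
  · simp only [mem_image, mem_compl, mem_insert, mem_singleton, not_exists, Sym2.eq_iff]
    grind

omit [Fintype V] in
lemma doubleStarCut_center : doubleStarCut i j S s(i, j) = S := if_pos rfl

lemma doubleStarCut_leaf {c : V} (hc : c ∈ ({i, j}ᶜ : Finset V)) :
    doubleStarCut i j S s(c, if c ∈ S then i else j) = {c} := by
  ext d
  simp only [mem_compl, mem_insert, mem_singleton] at hc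
  simp only [doubleStarCut, Sym2.toFinset_mk_eq, Sym2.eq_iff]
  grind

lemma isFundamentalCut_doubleStarCut (hi : i ∈ S) (hj : j ∉ S) {e : Sym2 V}
    (he : e ∈ doubleStar i j S) :
    IsFundamentalCut (edgeGraph (doubleStar i j S)) e (doubleStarCut i j S e) := by
  intro a b hab
  obtain ⟨hmem, hne⟩ := (SimpleGraph.fromEdgeSet_adj _).1 hab
  simp only [doubleStar, mem_coe, mem_insert, mem_image, mem_compl, mem_singleton] at he hmem
  rcases he with rfl | ⟨c, hc, rfl⟩
  · rw [doubleStarCut_center]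
    simp only [Sym2.eq_iff] at hmem ⊢
    grind
  · rw [doubleStarCut_leaf (by simpa using hc)]
    simp only [mem_singleton, Sym2.eq_iff] at hmem ⊢
    grind

end DoubleStar

section LeafCoefficients

variable {R : Type*} [CommRing R] {m : ℕ}

/-- The coefficient of the product of `A_{r,p}` and the partition `{r} ∪ {r}ᶜ`, which is the
diagonal coefficient attached to a leaf `r` hanging off `p` in a tree. It vanishes for `p = r`. -/
noncomputable def leafCoeff (R : Type*) [CommRing R] {m : ℕ} (p r : Fin m) :
    Module.Dual R (AIdx m × BIdx m → R) :=
  coeffAt R {r, p} {r}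

lemma leafCoeff_self (r : Fin m) : leafCoeff R r r = 0 := by
  refine sum_eq_zero fun q hq ↦ absurd q.1.2 ?_
  simp [(mem_filter.1 hq).2.1]

variable {α : AIdx m × BIdx m → R}

lemma coeffAt_eq_zero_of_subset (h2 : IsRegular (2 : R)) (hα : α ∈ quadraticRelations R m)
    {S : Finset (Fin m)} (hS : S ≠ univ) {k l : Fin m} (hk : k ∈ S) (hl : l ∈ S) (hkl : k ≠ l) :
    coeffAt R {k, l} S α = 0 := by
  obtain ⟨j, hj⟩ : ∃ j, j ∉ S := by simpa [eq_univ_iff_forall] using hS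
  have hlj : l ≠ j := ne_of_mem_of_not_mem hl hj
  have hkj : k ≠ j := ne_of_mem_of_not_mem hk hj
  have hleaf : s(k, l) ∈ doubleStar l j S :=
    mem_insert_of_mem (mem_image.2 ⟨k, by simp [hkl, hkj], by rw [if_pos hk]⟩)
  have h := coeffAt_eq_zero_of_isFundamentalCut h2 hα connected_doubleStar
    (edgeSet_doubleStar hlj).symm (fun _ ↦ isFundamentalCut_doubleStarCut hl hj)
    hleaf (mem_insert_self s(l, j) _) (by simp [hkl, hkj])
  rwa [doubleStarCut_center, Sym2.toFinset_mk_eq] at h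

lemma coeffAt_add_sum_leafCoeff (h2 : IsRegular (2 : R)) (hα : α ∈ quadraticRelations R m)
    {S : Finset (Fin m)} {i j : Fin m} (hi : i ∈ S) (hj : j ∉ S) :
    coeffAt R {i, j} S α + ∑ c, leafCoeff R (if c ∈ S then i else j) c α = 0 := by
  have hij : i ≠ j := ne_of_mem_of_not_mem hi hj
  have h := sum_coeffAt_eq_zero_of_isFundamentalCut h2 hα connected_doubleStar
    (edgeSet_doubleStar hij).symm fun _ ↦ isFundamentalCut_doubleStarCut hi hj
  rw [sum_doubleStar, doubleStarCut_center, Sym2.toFinset_mk_eq] at h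
  rw [← h, ← sum_subset (subset_univ {i, j}ᶜ)]
  · congr 1
    refine sum_congr rfl fun c hc ↦ ?_
    rw [doubleStarCut_leaf hc, Sym2.toFinset_mk_eq, leafCoeff]
  · intro c _ hc
    rw [mem_compl, not_not, mem_insert, mem_singleton] at hc
    rcases hc with rfl | rfl
    · rw [if_pos hi, leafCoeff_self, LinearMap.zero_apply]
    · rw [if_neg hj, leafCoeff_self, LinearMap.zero_apply]

lemma sum_leafCoeff (h2 : IsRegular (2 : R)) (hα : α ∈ quadraticRelations R m) (p : Fin m) :
    ∑ r, leafCoeff R p r α = 0 := by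
  by_cases hp : ∃ i, i ≠ p
  · obtain ⟨i, hip⟩ := hp
    rw [← coeffAt_add_sum_leafCoeff h2 hα (mem_singleton_self i) (notMem_singleton.2 hip.symm),
      ← leafCoeff, ← add_sum_erase _ _ (mem_univ i), ← add_sum_erase _ _ (mem_univ i),
      if_pos (mem_singleton_self i), leafCoeff_self, LinearMap.zero_apply, zero_add]
    congr 1
    exact sum_congr rfl fun r hr ↦ by rw [if_neg (notMem_singleton.2 (ne_of_mem_erase hr))]
  · push Not at hp
    exact sum_eq_zero fun r _ ↦ by rw [hp r, leafCoeff_self, LinearMap.zero_apply]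

lemma coeffAt_eq_sum_leafCoeff (h2 : IsRegular (2 : R)) (hα : α ∈ quadraticRelations R m)
    {S : Finset (Fin m)} {i j : Fin m} (hi : i ∈ S) (hj : j ∉ S) :
    coeffAt R {i, j} S α = ∑ r, leafCoeff R (if r ∈ S then j else i) r α := by
  have hswap : ∑ r, leafCoeff R (if r ∈ S then j else i) r α +
      ∑ r, leafCoeff R (if r ∈ S then i else j) r α = 0 := by
    calc
      _ = ∑ r, leafCoeff R i r α + ∑ r, leafCoeff R j r α := by
        rw [← sum_add_distrib, ← sum_add_distrib]
        refine sum_congr rfl fun r _ ↦ ?_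
        split_ifs
        · exact add_comm _ _
        · rfl
      _ = 0 := by rw [sum_leafCoeff h2 hα, sum_leafCoeff h2 hα, add_zero]
  exact add_right_cancel ((coeffAt_add_sum_leafCoeff h2 hα hi hj).trans hswap.symm)

end LeafCoefficients

section Basis

variable {R : Type*} [CommRing R] {m : ℕ}

lemma columnExpansion_eq_zero_of_mem_iff_mem {q : AIdx m × BIdx m} {i i' : Fin m}
    (hq : q.1.1 = {i, i'}) (hii' : i ≠ i') (h : i ∈ q.2.1 ↔ i' ∈ q.2.1) (j c : Fin m) :
    columnExpansion R j c q = 0 := by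
  refine if_neg ?_
  rw [hq]
  rintro ⟨hj, hsep⟩
  rcases (by simpa using hj : j = i ∨ j = i') with rfl | rfl
  · exact iff_not_self (h.trans (hsep i' (by simp [hii'.symm])))
  · exact iff_not_self (h.symm.trans (hsep i (by simp [hii'])))

lemma columnExpansion_eq_ite_of_mem_of_notMem {q : AIdx m × BIdx m} {i i' : Fin m}
    (hq : q.1.1 = {i, i'}) (hi : i ∈ q.2.1) (hi' : i' ∉ q.2.1) (j c : Fin m) :
    columnExpansion R j c q = if j = (if c ∈ q.2.1 then i' else i) then 1 else 0 := by
  have hii' : i ≠ i' := ne_of_mem_of_not_mem hi hi'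
  rw [columnExpansion, hq]
  refine if_congr ?_ rfl rfl
  grind

theorem eq_sum_leafCoeff_smul_columnExpansion (h2 : IsRegular (2 : R))
    {α : AIdx m × BIdx m → R} (hα : α ∈ quadraticRelations R m) :
    α = ∑ p, ∑ r, leafCoeff R p r α • columnExpansion R p r := by
  ext q
  simp only [Finset.sum_apply, Pi.smul_apply, smul_eq_mul]
  have separated {i i' : Fin m} (hq : q.1.1 = {i, i'}) (hi : i ∈ q.2.1) (hi' : i' ∉ q.2.1) :
      α q = ∑ p, ∑ r, leafCoeff R p r α * columnExpansion R p r q := by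
    rw [← coeffAt_self q α, hq, coeffAt_eq_sum_leafCoeff h2 hα hi hi', sum_comm]
    simp [columnExpansion_eq_ite_of_mem_of_notMem hq hi hi']
  obtain ⟨i, i', hii', hq⟩ := card_eq_two.1 q.1.2
  by_cases hi : i ∈ q.2.1 <;> by_cases hi' : i' ∈ q.2.1
  · rw [← coeffAt_self q α, hq, coeffAt_eq_zero_of_subset h2 hα q.2.2.2 hi hi' hii']
    simp [columnExpansion_eq_zero_of_mem_iff_mem hq hii' (iff_of_true hi hi')]
  · exact separated hq hi hi'
  · exact separated (hq.trans (pair_comm _ _)) hi' hi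
  · have hne : (q.2.1)ᶜ ≠ univ := by
      obtain ⟨⟨z, hz, -⟩, -⟩ := q.2.2
      exact (compl_ne_univ_iff_nonempty _).2 ⟨z, hz⟩
    rw [← coeffAt_self q α, hq, ← coeffAt_compl, coeffAt_eq_zero_of_subset h2 hα hne
      (mem_compl.2 hi) (mem_compl.2 hi') hii']
    simp [columnExpansion_eq_zero_of_mem_iff_mem hq hii' (iff_of_false hi hi')]

lemma BIdx.exists_eq_or_eq_compl {S : Finset (Fin m)} (hS : S.Nonempty) (hSu : S ≠ univ) :
    ∃ T : BIdx m, S = T.1 ∨ S = T.1ᶜ := by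
  obtain ⟨i, hi⟩ := hS
  let z : Fin m := ⟨0, i.pos⟩
  by_cases hz : z ∈ S
  · exact ⟨⟨S, ⟨z, hz, rfl⟩, hSu⟩, .inl rfl⟩
  · exact ⟨⟨Sᶜ, ⟨z, mem_compl.2 hz, rfl⟩, (compl_ne_univ_iff_nonempty _).2 ⟨i, hi⟩⟩,
      .inr (compl_compl S).symm⟩

lemma coeffAt_columnExpansion {s S : Finset (Fin m)} (hs : s.card = 2) (hS : S.Nonempty)
    (hSu : S ≠ univ) (j c : Fin m) :
    coeffAt R s S (columnExpansion R j c) =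
      if j ∈ s ∧ ∀ k ∈ insert c (s.erase j), k ∈ S ↔ j ∉ S then 1 else 0 := by
  obtain ⟨T, rfl | rfl⟩ := BIdx.exists_eq_or_eq_compl hS hSu
  · exact coeffAt_self (⟨s, hs⟩, T) _
  · rw [coeffAt_compl]
    refine (coeffAt_self (⟨s, hs⟩, T) _).trans (if_congr ?_ rfl rfl)
    simp only [mem_compl, not_iff_not]

lemma leafCoeff_columnExpansion {p r : Fin m} (hrp : r ≠ p) (j c : Fin m) :
    leafCoeff R p r (columnExpansion R j c) =
      (if j = r ∧ c ≠ r then 1 else 0) + if j = p ∧ c = r then 1 else 0 := by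
  rw [leafCoeff, coeffAt_columnExpansion (card_pair hrp) (singleton_nonempty r)
    fun h ↦ hrp (mem_singleton.1 (h ▸ mem_univ p)).symm]
  rcases eq_or_ne j r with rfl | hjr
  · simp [erase_insert (notMem_singleton.2 hrp), hrp, hrp.symm]
  rcases eq_or_ne j p with rfl | hjp
  · simp [pair_comm r j, erase_insert (notMem_singleton.2 hrp.symm), hrp.symm]
  · simp [hjr, hjp]

/-- The differences `L_{m,r}(p) - L_{m,c p}(p)` of identities obtained from the same column, where
`c p` is the reference choice in column `p`. -/
def columnDifference (R : Type*) [CommRing R] {m : ℕ} (c : Fin m → Fin m)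
    (i : Σ p : Fin m, ({p, c p}ᶜ : Finset (Fin m))) : AIdx m × BIdx m → R :=
  columnExpansion R i.1 i.2 - columnExpansion R i.1 (c i.1)

lemma columnExpansion_sub_mem_quadraticRelations {j c c' : Fin m} (hc : j ≠ c) (hc' : j ≠ c') :
    columnExpansion R j c - columnExpansion R j c' ∈ quadraticRelations R m := by
  intro V _ _ G _ x v hv
  simp only [Pi.sub_apply, sub_mul, sum_sub_distrib]
  rw [← forestPoly_const_mul_forestPoly_discrete_eq_sum G x hv hc,
    ← forestPoly_const_mul_forestPoly_discrete_eq_sum G x hv hc', sub_self]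

variable {c : Fin m → Fin m}

theorem linearIndependent_columnDifference (hc : ∀ p, c p ≠ p) :
    LinearIndependent R (columnDifference R c) := by
  have hdual (i k : Σ p : Fin m, ({p, c p}ᶜ : Finset (Fin m))) :
      leafCoeff R i.1 i.2.1 (columnDifference R c k) = if k = i then 1 else 0 := by
    obtain ⟨p, r, hr⟩ := i
    obtain ⟨p', r', hr'⟩ := k
    simp only [mem_compl, mem_insert, mem_singleton, not_or] at hr hr'
    rw [columnDifference, map_sub, leafCoeff_columnExpansion hr.1,
      leafCoeff_columnExpansion hr.1]
    have hp := hc p'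
    grind
  refine .of_pairwise_dual_eq_zero_one _ (fun i ↦ leafCoeff R i.1 i.2.1) ?_ ?_
  · exact fun i k hik ↦ (hdual i k).trans (if_neg hik.symm)
  · exact fun i ↦ (hdual i i).trans (if_pos rfl)

theorem span_range_columnDifference (h2 : IsRegular (2 : R)) (hc : ∀ p, c p ≠ p) :
    Submodule.span R (Set.range (columnDifference R c)) = quadraticRelations R m := by
  refine le_antisymm (Submodule.span_le.2 ?_) fun α hα ↦ ?_
  · rintro _ ⟨⟨p, r, hr⟩, rfl⟩
    simp only [mem_compl, mem_insert, mem_singleton, not_or] at hr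
    exact columnExpansion_sub_mem_quadraticRelations (Ne.symm hr.1) (hc p).symm
  have hexpand : α = ∑ p, ∑ r,
      leafCoeff R p r α • (columnExpansion R p r - columnExpansion R p (c p)) := by
    simp only [smul_sub, sum_sub_distrib, ← sum_smul, sum_leafCoeff h2 hα, zero_smul, sub_zero]
    exact eq_sum_leafCoeff_smul_columnExpansion h2 hα
  rw [hexpand]
  refine sum_mem fun p _ ↦ sum_mem fun r _ ↦ ?_
  by_cases hr : r ∈ ({p, c p} : Finset (Fin m))
  · rcases (by simpa using hr : r = p ∨ r = c p) with rfl | rfl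
    · simp [leafCoeff_self]
    · simp
  · exact Submodule.smul_mem _ _ (Submodule.subset_span ⟨⟨p, r, mem_compl.2 hr⟩, rfl⟩)

lemma card_sigma_compl_pair (hc : ∀ p, c p ≠ p) :
    Fintype.card (Σ p : Fin m, ({p, c p}ᶜ : Finset (Fin m))) = m * (m - 2) := by
  simp only [Fintype.card_sigma, Fintype.card_coe, card_compl, card_pair (hc _).symm,
    Fintype.card_fin, sum_const, card_univ, smul_eq_mul]

end Basis

theorem vlasev_yeats_conjecture_general {R : Type*} [CommRing R] (h2 : IsRegular (2 : R)) (m : ℕ)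
    (hm : 2 ≤ m) :
    (∃ f : Fin (m * (m - 2)) → (AIdx m × BIdx m → R),
      LinearIndependent R f ∧ Submodule.span R (Set.range f) = quadraticRelations R m) ∧
    ∃ β : AIdx m × BIdx m → R,
      ∀ (V : Type) [Fintype V] [DecidableEq V] (G : SimpleGraph V) [DecidableRel G.Adj]
        (x : Sym2 V → R) (v : Fin m → V), Function.Injective v →
        forestPoly G x v (fun _ ↦ some 0) * forestPoly G x v (fun i ↦ some (i : ℕ)) =
          ∑ q : AIdx m × BIdx m, β q *
            (forestPoly G x v (partA q.1.val) * forestPoly G x v (partB q.2.val)) := by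
  have : Nontrivial (Fin m) := Fin.nontrivial_iff_two_le.2 hm
  choose c hc using fun p : Fin m ↦ exists_ne p
  let e := (Fintype.equivFinOfCardEq (card_sigma_compl_pair hc)).symm
  refine ⟨⟨columnDifference R c ∘ e, ?_, ?_⟩, ?_⟩
  · exact (linearIndependent_equiv e).2 (linearIndependent_columnDifference hc)
  · rw [e.surjective.range_comp, span_range_columnDifference h2 hc]
  · obtain ⟨j, k, hjk⟩ := exists_pair_ne (Fin m)
    exact ⟨columnExpansion R j k, fun V _ _ G _ x v hv ↦
      forestPoly_const_mul_forestPoly_discrete_eq_sum G x hv hjk⟩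

/-- **The Vlasev–Yeats conjecture** (main theorem of the paper).  For every `m ≥ 3` the
space `X_m` of vanishing quadratic combinations of `A`- and `B`-spanning-forest
polynomials has dimension exactly `m(m−2)` (it has a linearly independent spanning set of
that size), and there is at least one identity
`Φ_{(1,…,1)} Φ_{(1,2,…,m)} = Σ α_{ij} A_iB_j` valid on all graphs; hence the most
general such identity has `m(m−2)` free parameters. -/
theorem vlasev_yeats_conjecture (m : ℕ) (hm : 3 ≤ m) :
    (∃ f : Fin (m * (m - 2)) → (AIdx m × BIdx m → ℚ),
      LinearIndependent ℚ f ∧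
        ∀ α : AIdx m × BIdx m → ℚ,
          MemX m α ↔ α ∈ Submodule.span ℚ (Set.range f)) ∧
    (∃ β : AIdx m × BIdx m → ℚ,
      ∀ (V : Type) [Fintype V] [DecidableEq V] (G : SimpleGraph V) [DecidableRel G.Adj]
        (x : Sym2 V → ℚ) (v : Fin m → V), Function.Injective v →
        forestPoly G x v (fun _ => some 0) * forestPoly G x v (fun i => some (i : ℕ)) =
          ∑ q : AIdx m × BIdx m, β q *
            (forestPoly G x v (partA q.1.val) * forestPoly G x v (partB q.2.val))) := by
  obtain ⟨⟨f, hf, hspan⟩, hβ⟩ :=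
    vlasev_yeats_conjecture_general (IsRegular.of_ne_zero (two_ne_zero (α := ℚ))) m (by omega)
  exact ⟨⟨f, hf, fun α ↦ by rw [hspan]; rfl⟩, hβ⟩
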